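/- There is an absolute constant c > 0 such that the following holds. For every d ≥ 1, n ≥ 1, m > 0, δ ∈ (0,1), and every invertible positive definite matrix Σ ∈ ℝ^{d×d}, there exists a measurable estimator w̃ : (ℝ^d × ℝ)^n → ℝ^d (depending on Σ and δ) such that for every distribution P of (X,Y) ∈ ℝ^d × ℝ satisfying Assumption 1 with constant m and E[X Xᵀ] = Σ, if (X_i,Y_i)_{i=1}^n is an i.i.d. sample from P, then with probability at least 1 - δ, R(⟨w̃, ·⟩) - inf_{g ∈ F_lin} R(g) ≤ c m² (d + log(1/δ)) / n. -/

import Mathlib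

/-!
Write `Sig = BᵀB` and whiten: `Z = A X` with `A = (Bᵀ)⁻¹` satisfies `E[Z Zᵀ] = 1`. In this
coordinate the risk of `x ↦ ⟨u, A x⟩` is `K + |u - μ|²`, where `μ = E[Y Z]` and `K` does not depend
on `u`. Since `Sig` is known, the task reduces to estimating the mean `μ` of the observable vector
`U = Y Z`, in Euclidean norm. The conditional moment bound gives
`E⟨c, U⟩² ≤ m² E⟨c, Z⟩² = m² |c|²` in every direction `c` (`lintegral_sq_mul_le`), and no higher
moment is available.

In a fixed direction, the mean of truncated observations has sub-Gaussian deviations, because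
`exp (clip t) ≤ 1 + t + t²` bounds its exponential moments by the first two moments (`one_sided`).
Testing against a maximal separated set of `5 ^ d` directions suffices to control the Euclidean
norm (`exists_net`), and a union bound over these directions costs a term of order `d` in the
exponent. Any vector compatible with all the directional estimates is then close to `μ`
(`mean_est`).
-/

open MeasureTheory ProbabilityTheory ENNReal Matrix

/-- The (population) risk of a predictor `g`, with respect to the distribution `P`
of a random pair `(X, Y) ∈ ℝ^d × ℝ`: `R(g) = E[(g(X) - Y)²]`. -/
noncomputable def risk {d : ℕ} (P : Measure ((Fin d → ℝ) × ℝ)) (g : (Fin d → ℝ) → ℝ) : ℝ≥0∞ :=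
  ∫⁻ p, ENNReal.ofReal ((g p.1 - p.2) ^ 2) ∂P

/-- Assumption 1: `sup_x E[Y² | X = x] ≤ m²`, formalized as an almost-everywhere bound on the
conditional expectation of `Y²` given the σ-algebra generated by `X` (the first coordinate). -/
def Assumption1 {d : ℕ} (P : Measure ((Fin d → ℝ) × ℝ)) (m : ℝ) : Prop :=
  ∀ᵐ p ∂P,
    (P[fun q : (Fin d → ℝ) × ℝ => q.2 ^ 2|MeasurableSpace.comap Prod.fst inferInstance]) p ≤ m ^ 2

/-! ### Robust estimation of one-dimensional means -/

/-- Truncation of a real number to `[-1, 1]`, the influence function of the robust mean. -/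
def clip (t : ℝ) : ℝ := max (-1) (min 1 t)

theorem abs_clip_le (t : ℝ) : |clip t| ≤ 1 := by
  unfold clip; rw [abs_le]; exact ⟨le_max_left _ _, max_le (by norm_num) (min_le_left _ _)⟩

theorem clip_neg (t : ℝ) : clip (-t) = -clip t := by
  unfold clip
  rcases le_total 1 t with h | h <;> rcases le_total t (-1) with h' | h' <;>
    simp only [min_def, max_def] <;> split_ifs <;> linarith

theorem measurable_clip : Measurable clip := by unfold clip; fun_prop

/-- The reason for truncating: the exponential moment of `clip t` is controlled by the first two
moments of `t` alone. -/
theorem exp_clip_le (t : ℝ) : Real.exp (clip t) ≤ 1 + t + t ^ 2 := by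
  have key : ∀ u : ℝ, |u| ≤ 1 → Real.exp u ≤ 1 + u + u ^ 2 := fun u hu => by
    have := (abs_le.1 (Real.abs_exp_sub_one_sub_id_le hu)).2
    linarith
  have h := key (clip t) (abs_clip_le t)
  refine h.trans ?_
  unfold clip
  rcases le_total 1 t with h1 | h1
  · rw [min_eq_left h1, max_eq_right (by norm_num)]; nlinarith
  · rw [min_eq_right h1]
    rcases le_total (-1) t with h2 | h2
    · rw [max_eq_right h2]
    · rw [max_eq_left h2]; nlinarith

/-- Chernoff bound for the sum of truncated observations. It uses only two moments of `f`; applied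
to `-f` it gives the matching lower tail, because `clip` is odd. -/
theorem one_sided {Ω : Type*} [MeasurableSpace Ω] (P : Measure Ω) [IsProbabilityMeasure P]
    (n : ℕ) (f : Ω → ℝ) (hf : Measurable f) (hi : MemLp f 2 P) {s θ L : ℝ}
    (hs : ∫ x, f x ^ 2 ∂P ≤ s) :
    (Measure.pi fun _ : Fin n => P)
      {ξ | n * (θ * ∫ x, f x ∂P) + n * (θ ^ 2 * s) + L ≤ ∑ i, clip (θ * f (ξ i))}
      ≤ ENNReal.ofReal (Real.exp (-L)) := by
  set Q := (Measure.pi fun _ : Fin n => P)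
  have hf1 : Integrable f P := hi.integrable (by norm_num)
  have hf2 : Integrable (fun x => f x ^ 2) P := hi.integrable_sq
  have hc : Measurable fun x => clip (θ * f x) := measurable_clip.comp (by fun_prop)
  have hic : Integrable (fun x => Real.exp (clip (θ * f x))) P := by
    refine Integrable.of_bound
      (Real.measurable_exp.comp hc).aestronglyMeasurable (Real.exp 1) (.of_forall fun x => ?_)
    rw [Real.norm_eq_abs, Real.abs_exp, Real.exp_le_exp]
    exact (abs_le.1 (abs_clip_le _)).2
  have h1 : ∫ x, Real.exp (clip (θ * f x)) ∂P
      ≤ Real.exp (θ * ∫ x, f x ∂P + θ ^ 2 * s) := by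
    calc _ ≤ ∫ x, (1 + θ * f x + θ ^ 2 * f x ^ 2) ∂P := by
            refine integral_mono hic
              (((integrable_const 1).add (hf1.const_mul θ)).add (hf2.const_mul _)) fun x => ?_
            have := exp_clip_le (θ * f x)
            simpa [mul_pow] using this
      _ = 1 + θ * ∫ x, f x ∂P + θ ^ 2 * ∫ x, f x ^ 2 ∂P := by
            have h12 : Integrable (fun x => 1 + θ * f x) P :=
              (integrable_const 1).add (hf1.const_mul θ)
            rw [integral_add h12 (hf2.const_mul _),
              integral_add (integrable_const 1) (hf1.const_mul θ), integral_const_mul,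
              integral_const_mul]
            simp
      _ ≤ (θ * ∫ x, f x ∂P + θ ^ 2 * s) + 1 := by
            nlinarith [mul_le_mul_of_nonneg_left hs (sq_nonneg θ)]
      _ ≤ _ := Real.add_one_le_exp _
  have hprod : ∀ ξ : Fin n → Ω, Real.exp (1 * ∑ i, clip (θ * f (ξ i)))
      = ∏ i, Real.exp (clip (θ * f (ξ i))) := fun ξ => by rw [one_mul, Real.exp_sum]
  have hI : Integrable (fun ξ : Fin n → Ω => Real.exp (1 * ∑ i, clip (θ * f (ξ i)))) Q := by
    simp_rw [hprod]
    exact Integrable.fintype_prod (f := fun _ x => Real.exp (clip (θ * f x))) fun _ => hic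
  have hM : mgf (fun ξ : Fin n → Ω => ∑ i, clip (θ * f (ξ i))) Q 1
      ≤ Real.exp (n * (θ * ∫ x, f x ∂P) + n * (θ ^ 2 * s)) := by
    unfold mgf
    simp_rw [hprod]
    rw [integral_fintype_prod_eq_pow (fun x => Real.exp (clip (θ * f x))), Fintype.card_fin,
      ← mul_add, Real.exp_nat_mul]
    exact pow_le_pow_left₀ (integral_nonneg fun x => (Real.exp_pos _).le) h1 n
  have := measure_ge_le_exp_mul_mgf (n * (θ * ∫ x, f x ∂P) + n * (θ ^ 2 * s) + L)
    zero_le_one hI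
  rw [← ofReal_measureReal]
  refine ENNReal.ofReal_le_ofReal (this.trans ?_)
  refine (mul_le_mul_of_nonneg_left hM (Real.exp_pos _).le).trans_eq ?_
  rw [← Real.exp_add]; congr 1; ring

/-! ### A finite set of test directions -/

/-- A maximal `1`-separated subset of the Euclidean ball of radius `2`: it has at most `5 ^ d`
elements, and every vector `e` has inner product at least its Euclidean norm with one of them.
Euclidean norms are written through `⬝ᵥ`, since `Fin d → ℝ` carries the sup norm. -/
theorem exists_net (d : ℕ) : ∃ N : Finset (Fin d → ℝ), N.card ≤ 5 ^ d ∧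
    (∀ c ∈ N, c ⬝ᵥ c ≤ 4) ∧
    ∀ (e : Fin d → ℝ) (t : ℝ), 0 ≤ t → (∀ c ∈ N, c ⬝ᵥ e ≤ t) → e ⬝ᵥ e ≤ t ^ 2 := by
  classical
  let E := EuclideanSpace ℝ (Fin d)
  let good : Finset E → Prop := fun s =>
    (∀ c ∈ s, ‖c‖ ≤ 2) ∧ ∀ c ∈ s, ∀ c' ∈ s, c ≠ c' → 1 ≤ ‖c - c'‖
  have hcard : ∀ s, good s → s.card ≤ 5 ^ d := fun s hs => by
    simpa [E] using Besicovitch.card_le_of_separated s hs.1 hs.2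
  obtain ⟨s, hs, hmax⟩ : ∃ s, good s ∧ ∀ s', good s' → s'.card ≤ s.card := by
    have hex : ∃ k, ∃ s, good s ∧ s.card = k := ⟨0, ∅, by simp [good], rfl⟩
    have hb : ∀ k, (∃ s, good s ∧ s.card = k) → k ≤ 5 ^ d := by
      rintro k ⟨s, hs, rfl⟩; exact hcard s hs
    obtain ⟨k0, hk0⟩ := hex
    obtain ⟨s, hs, hk⟩ := Nat.findGreatest_spec (P := fun k => ∃ s, good s ∧ s.card = k)
      (hb _ hk0) hk0
    refine ⟨s, hs, fun s' hs' => ?_⟩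
    rw [hk]
    exact Nat.le_findGreatest (hcard s' hs') ⟨s', hs', rfl⟩
  have hdot : ∀ a b : E, a.ofLp ⬝ᵥ b.ofLp = inner ℝ a b := fun a b => by
    rw [EuclideanSpace.inner_eq_star_dotProduct, star_trivial, dotProduct_comm]
  refine ⟨s.image WithLp.ofLp, Finset.card_image_le.trans (hcard s hs), ?_, ?_⟩
  · intro c hc
    obtain ⟨c, hcs, rfl⟩ := Finset.mem_image.1 hc
    rw [hdot, real_inner_self_eq_norm_sq]
    nlinarith [hs.1 c hcs, norm_nonneg c]
  · intro e' t ht he'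
    obtain ⟨e, rfl⟩ : ∃ e : E, e.ofLp = e' := ⟨WithLp.toLp 2 e', rfl⟩
    rw [hdot, real_inner_self_eq_norm_sq]
    refine pow_le_pow_left₀ (norm_nonneg _) ?_ 2
    rcases eq_or_ne e 0 with rfl | he
    · simpa using ht
    have hepos : 0 < ‖e‖ := norm_pos_iff.2 he
    -- If `c` is within distance `1` of `v = (2 / ‖e‖) e`, then `⟨c, e⟩ ≥ 2‖e‖ - ‖e‖ = ‖e‖`.
    set v : E := (2 / ‖e‖) • e with hv
    have hvn : ‖v‖ = 2 := by
      rw [hv, norm_smul, Real.norm_of_nonneg (by positivity)]; field_simp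
    obtain ⟨c, hc, hvc⟩ : ∃ c ∈ s, ‖v - c‖ ≤ 1 := by
      -- Otherwise `v` could be added to `s`, against maximality.
      by_contra! hcon
      have hvs : v ∉ s := fun h => by simpa using (hcon v h).trans' zero_lt_one |>.ne'
      have : good (insert v s) := by
        refine ⟨?_, ?_⟩
        · intro c hc
          rcases Finset.mem_insert.1 hc with rfl | hc
          · exact hvn.le
          · exact hs.1 c hc
        · intro a ha b hb hab
          rcases Finset.mem_insert.1 ha with rfl | ha <;>
            rcases Finset.mem_insert.1 hb with rfl | hb
          · exact absurd rfl hab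
          · exact (hcon b hb).le
          · rw [norm_sub_rev]; exact (hcon a ha).le
          · exact hs.2 a ha b hb hab
      have := hmax _ this
      rw [Finset.card_insert_of_notMem hvs] at this
      omega
    have h1 := he' c.ofLp (Finset.mem_image_of_mem _ hc)
    rw [hdot] at h1
    have h2 : inner ℝ v e = 2 * ‖e‖ := by
      rw [hv, real_inner_smul_left, real_inner_self_eq_norm_sq]; field_simp
    have h3 : inner ℝ (v - c) e ≤ 1 * ‖e‖ :=
      (real_inner_le_norm _ _).trans (mul_le_mul_of_nonneg_right hvc hepos.le)
    rw [inner_sub_left] at h3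
    linarith

/-! ### Robust estimation of a mean vector -/

/-- The total failure probability of the `2 * 5 ^ d` one-sided tests at level
`3 * (d + log (1 / δ))`. -/
theorem union_bound {d : ℕ} (hd : 1 ≤ d) {δ : ℝ} (hδ : 0 < δ) (hδ1 : δ < 1) :
    (5 : ℝ) ^ d * (2 * Real.exp (-(3 * (d + Real.log (1 / δ))))) ≤ δ := by
  have hlog : 0 ≤ Real.log (1 / δ) := Real.log_nonneg (by rw [le_div_iff₀ hδ]; linarith)
  have h1 : Real.exp (-(3 * (d + Real.log (1 / δ)))) ≤ Real.exp (-3) ^ d * δ := by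
    have : δ = Real.exp (-Real.log (1 / δ)) := by
      rw [one_div, Real.log_inv, neg_neg, Real.exp_log hδ]
    rw [← Real.exp_nat_mul]
    nth_rewrite 2 [this]
    rw [← Real.exp_add, Real.exp_le_exp]
    linarith
  have h10 : 10 * Real.exp (-3) ≤ 1 := by
    have h3 : (10 : ℝ) ≤ Real.exp 3 := by
      have h : Real.exp 3 = Real.exp 1 ^ 3 := by rw [← Real.exp_nat_mul]; norm_num
      rw [h]
      calc (10 : ℝ) ≤ 2.7 ^ 3 := by norm_num
        _ ≤ _ := pow_le_pow_left₀ (by norm_num) (by linarith [Real.exp_one_gt_d9]) 3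
    rw [Real.exp_neg, ← div_eq_mul_inv, div_le_one (Real.exp_pos _)]
    exact h3
  have h2 : (2 : ℝ) ≤ 2 ^ d := by
    simpa using pow_le_pow_right₀ (one_le_two : (1 : ℝ) ≤ 2) hd
  calc (5 : ℝ) ^ d * (2 * Real.exp (-(3 * (d + Real.log (1 / δ)))))
      ≤ 5 ^ d * (2 ^ d * (Real.exp (-3) ^ d * δ)) := by gcongr
    _ = (10 * Real.exp (-3)) ^ d * δ := by
        rw [mul_pow, show (10 : ℝ) = 5 * 2 by norm_num, mul_pow]; ring
    _ ≤ 1 * δ := by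
        gcongr
        exact pow_le_one₀ (by positivity) h10
    _ = δ := one_mul _

/-- A robust estimator of the mean `μ` of a random vector `U` whose second moment in each direction
`c` is at most `m ^ 2 * (c ⬝ᵥ c)`. The bounds are required of the distribution only, so that `est`
depends on `m` and `δ` but not on `P`. -/
theorem mean_est {Ω : Type*} [MeasurableSpace Ω] {d n : ℕ} (hd : 1 ≤ d) (hn : 1 ≤ n)
    {m : ℝ} (hm : 0 < m) {δ : ℝ} (hδ : 0 < δ) (hδ1 : δ < 1)
    (U : Ω → Fin d → ℝ) (hU : Measurable U) :
    ∃ est : (Fin n → Ω) → Fin d → ℝ, Measurable est ∧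
      ∀ P : Measure Ω, IsProbabilityMeasure P → (∀ c, MemLp (fun x => c ⬝ᵥ U x) 2 P) →
        (∀ c, ∫ x, (c ⬝ᵥ U x) ^ 2 ∂P ≤ m ^ 2 * (c ⬝ᵥ c)) →
        ∀ μ : Fin d → ℝ, (∀ c, ∫ x, c ⬝ᵥ U x ∂P = c ⬝ᵥ μ) →
        ENNReal.ofReal (1 - δ) ≤ (Measure.pi fun _ : Fin n => P)
          {ξ | (est ξ - μ) ⬝ᵥ (est ξ - μ) ≤ 432 * m ^ 2 * (d + Real.log (1 / δ)) / n} := by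
  classical
  obtain ⟨N, hNcard, hN4, hN⟩ := exists_net d
  have hlog : 0 ≤ Real.log (1 / δ) := Real.log_nonneg (by rw [le_div_iff₀ hδ]; linarith)
  have hn0 : (0 : ℝ) < n := by exact_mod_cast hn
  have hd0 : (0 : ℝ) < d := by exact_mod_cast hd
  set L : ℝ := 3 * (d + Real.log (1 / δ)) with hL
  have hL0 : 0 < L := by positivity
  -- This `θ` balances the bias term `n * θ ^ 2 * (4 * m ^ 2)` of the Chernoff bound against `L`;
  -- here `4 * m ^ 2` bounds the second moment in the directions of the net, which have norm `≤ 2`.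
  set θ : ℝ := √(L / (n * (4 * m ^ 2))) with hθ
  have hθ0 : 0 < θ := Real.sqrt_pos.2 (by positivity)
  have hθ2 : n * (θ ^ 2 * (4 * m ^ 2)) = L := by
    rw [hθ, Real.sq_sqrt (by positivity)]; field_simp
  set r : ℝ := 2 * L / (n * θ) with hr
  have hr0 : 0 < r := by positivity
  have hr2 : (3 * r) ^ 2 = 432 * m ^ 2 * (d + Real.log (1 / δ)) / n := by
    have hD : (d + Real.log (1 / δ)) = L / 3 := by rw [hL]; ring
    rw [hD, hr, eq_div_iff hn0.ne', mul_pow, div_pow, mul_pow (n : ℝ)]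
    have h2 : θ ^ 2 = L / (n * (4 * m ^ 2)) := by
      rw [hθ, Real.sq_sqrt (by positivity)]
    rw [h2]; field_simp; norm_num
  let S : (Fin d → ℝ) → (Fin n → Ω) → ℝ := fun c ξ => ∑ i, clip (θ * (c ⬝ᵥ U (ξ i)))
  have hcU : ∀ c : Fin d → ℝ, Measurable fun x => c ⬝ᵥ U x := fun c => by
    unfold dotProduct; fun_prop
  have hS : ∀ c, Measurable (S c) := fun c =>
    Finset.measurable_fun_sum _ fun i _ =>
      measurable_clip.comp (((hcU c).comp (measurable_pi_apply i)).const_mul θ)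
  -- The estimator is the first vector of a dense sequence that agrees with all the directional
  -- estimates `S c ξ / (n * θ)` up to `2 * r`; scanning a sequence makes the choice measurable.
  let q : ℕ → Fin d → ℝ := TopologicalSpace.denseSeq (Fin d → ℝ)
  let p : (Fin n → Ω) → ℕ → Prop := fun ξ k => ∀ c ∈ N, |c ⬝ᵥ q k - S c ξ / (n * θ)| < 2 * r
  have hp : ∀ k, MeasurableSet {ξ | p ξ k} := fun k => by
    have : {ξ | p ξ k} = ⋂ c ∈ N, {ξ | |c ⬝ᵥ q k - S c ξ / (n * θ)| < 2 * r} := by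
      ext; simp [p]
    rw [this]
    refine Finset.measurableSet_biInter _ fun c _ => measurableSet_lt ?_ measurable_const
    exact (((hS c).div_const _).const_sub _).abs
  have hex : ∀ ξ, ∃ k, p ξ k ∨ ∀ j, ¬ p ξ j := fun ξ => by
    -- The second alternative only serves to define the estimator when no candidate fits.
    by_cases h : ∃ k, p ξ k
    · exact h.imp fun _ => Or.inl
    · exact ⟨0, Or.inr (not_exists.1 h)⟩
  refine ⟨fun ξ => q (Nat.find (hex ξ)), ?_, ?_⟩
  · refine (measurable_of_countable q).comp (measurable_find hex fun k => ?_)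
    refine (hp k).union ?_
    have : {ξ | ∀ j, ¬ p ξ j} = ⋂ j, {ξ | p ξ j}ᶜ := by ext; simp
    change MeasurableSet {ξ | ∀ j, ¬ p ξ j}
    rw [this]
    exact MeasurableSet.iInter fun j => (hp j).compl
  intro P hP hLp hV μ hμ
  set Q := (Measure.pi fun _ : Fin n => P)
  let bad : (Fin d → ℝ) → Set (Fin n → Ω) := fun c =>
    {ξ | n * (θ * (c ⬝ᵥ μ)) + 2 * L ≤ S c ξ}
  have hbad : ∀ c, c ⬝ᵥ c ≤ 4 → Q (bad c) ≤ ENNReal.ofReal (Real.exp (-L)) := fun c hc => by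
    have h := one_sided P n (fun x => c ⬝ᵥ U x) (hcU c) (hLp c) (s := 4 * m ^ 2) (θ := θ)
      (L := L) ((hV c).trans (by nlinarith [sq_nonneg m]))
    rw [hθ2, hμ c] at h
    refine (measure_mono fun ξ hξ => ?_).trans h
    have hξ' : n * (θ * (c ⬝ᵥ μ)) + 2 * L ≤ S c ξ := hξ
    change n * (θ * (c ⬝ᵥ μ)) + L + L ≤ S c ξ
    linarith
  have hB : Q (⋃ c ∈ N, (bad c ∪ bad (-c))) ≤ ENNReal.ofReal δ := by
    calc Q (⋃ c ∈ N, (bad c ∪ bad (-c)))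
        ≤ ∑ c ∈ N, Q (bad c ∪ bad (-c)) := measure_biUnion_finset_le _ _
      _ ≤ ∑ c ∈ N, ENNReal.ofReal (2 * Real.exp (-L)) := by
          refine Finset.sum_le_sum fun c hc => (measure_union_le _ _).trans ?_
          rw [two_mul, ENNReal.ofReal_add (Real.exp_pos _).le (Real.exp_pos _).le]
          exact add_le_add (hbad c (hN4 c hc)) (hbad (-c) (by simpa using hN4 c hc))
      _ = ENNReal.ofReal (N.card * (2 * Real.exp (-L))) := by
          rw [Finset.sum_const, nsmul_eq_mul,
            ENNReal.ofReal_mul (p := (N.card : ℝ)) (by positivity), ENNReal.ofReal_natCast]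
      _ ≤ ENNReal.ofReal δ := by
          refine ENNReal.ofReal_le_ofReal (le_trans ?_ (union_bound hd hδ hδ1))
          gcongr
          exact_mod_cast hNcard
  rw [ENNReal.ofReal_sub _ hδ.le, ENNReal.ofReal_one, tsub_le_iff_right]
  have hcover : (Set.univ : Set (Fin n → Ω)) ⊆
      {ξ | (q (Nat.find (hex ξ)) - μ) ⬝ᵥ (q (Nat.find (hex ξ)) - μ)
        ≤ 432 * m ^ 2 * (d + Real.log (1 / δ)) / n} ∪ ⋃ c ∈ N, (bad c ∪ bad (-c)) := by
    intro ξ _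
    by_cases hξ : ξ ∈ ⋃ c ∈ N, (bad c ∪ bad (-c))
    · exact Or.inr hξ
    left
    have hgood : ∀ c ∈ N, |c ⬝ᵥ μ - S c ξ / (n * θ)| < r := fun c hc => by
      have hb : ξ ∉ bad c ∪ bad (-c) := fun h => hξ (Set.mem_biUnion hc h)
      have h1 : S c ξ < n * (θ * (c ⬝ᵥ μ)) + 2 * L := not_le.1 fun h => hb (Or.inl h)
      have h2 : S (-c) ξ < n * (θ * (-c ⬝ᵥ μ)) + 2 * L := not_le.1 fun h => hb (Or.inr h)
      have h3 : S (-c) ξ = -S c ξ := by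
        simp only [S, neg_dotProduct, mul_neg, clip_neg, Finset.sum_neg_distrib]
      rw [h3, neg_dotProduct] at h2
      have h4 : c ⬝ᵥ μ - S c ξ / (n * θ) = (n * (θ * (c ⬝ᵥ μ)) - S c ξ) / (n * θ) := by
        field_simp
      rw [h4, abs_div, abs_of_pos (by positivity : (0 : ℝ) < n * θ), hr]
      refine div_lt_div_of_pos_right ?_ (by positivity)
      rw [abs_lt]; constructor <;> linarith
    have hk : ∃ k, p ξ k := by
      have ho : IsOpen {v : Fin d → ℝ | ∀ c ∈ N, |c ⬝ᵥ v - S c ξ / (n * θ)| < 2 * r} := by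
        have : {v : Fin d → ℝ | ∀ c ∈ N, |c ⬝ᵥ v - S c ξ / (n * θ)| < 2 * r}
          = ⋂ c ∈ N, {v | |c ⬝ᵥ v - S c ξ / (n * θ)| < 2 * r} := by ext; simp
        rw [this]
        refine isOpen_biInter_finset fun c _ => isOpen_lt ?_ continuous_const
        unfold dotProduct; fun_prop
      exact (TopologicalSpace.denseRange_denseSeq _).exists_mem_open ho
        ⟨μ, fun c hc => (hgood c hc).trans (by linarith)⟩
    have hf : p ξ (Nat.find (hex ξ)) := by
      rcases Nat.find_spec (hex ξ) with h | h
      · exact h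
      · exact absurd hk (not_exists.2 h)
    rw [Set.mem_ofPred_eq, ← hr2]
    refine hN _ _ (by positivity) fun c hc => ?_
    have h1 := (abs_lt.1 (hf c hc)).2
    have h2 := (abs_lt.1 (hgood c hc)).1
    rw [dotProduct_sub]
    linarith
  calc (1 : ℝ≥0∞) = Q Set.univ := measure_univ.symm
    _ ≤ _ := measure_mono hcover
    _ ≤ _ := measure_union_le _ _
    _ ≤ _ := by gcongr

/-! ### The conditional moment assumption and whitening -/

/-- `E[Y² h(X)] ≤ m² E[h(X)]` for every nonnegative measurable `h`. The conditional moment bound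
compares two measures on the space of `X`, so integrability of `Y² h(X)` is not needed. -/
theorem lintegral_sq_mul_le {d : ℕ} (P : Measure ((Fin d → ℝ) × ℝ)) [IsProbabilityMeasure P]
    {m : ℝ} (hA : Assumption1 P m) (hY : Integrable (fun p => p.2 ^ 2) P)
    {h : (Fin d → ℝ) → ℝ≥0∞} (hh : Measurable h) :
    ∫⁻ p, ENNReal.ofReal (p.2 ^ 2) * h p.1 ∂P ≤ ENNReal.ofReal (m ^ 2) * ∫⁻ p, h p.1 ∂P := by
  have hmY : Measurable fun p : (Fin d → ℝ) × ℝ => ENNReal.ofReal (p.2 ^ 2) := by fun_prop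
  have hle : (P.withDensity fun p => ENNReal.ofReal (p.2 ^ 2)).map Prod.fst
      ≤ ENNReal.ofReal (m ^ 2) • P.map Prod.fst := by
    refine Measure.le_iff.2 fun T hT => ?_
    have hT' : MeasurableSet ((Prod.fst : (Fin d → ℝ) × ℝ → _) ⁻¹' T) := measurable_fst hT
    rw [Measure.map_apply measurable_fst hT, withDensity_apply _ hT', Measure.smul_apply,
      Measure.map_apply measurable_fst hT, smul_eq_mul,
      ← ofReal_integral_eq_lintegral_ofReal hY.integrableOn (.of_forall fun p => sq_nonneg _),
      ← setIntegral_condExp (m := MeasurableSpace.comap Prod.fst inferInstance)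
        measurable_fst.comap_le hY ⟨T, hT, rfl⟩, ← ofReal_measureReal,
      ← ENNReal.ofReal_mul (sq_nonneg m)]
    refine ENNReal.ofReal_le_ofReal ?_
    calc _ ≤ ∫ p in Prod.fst ⁻¹' T, m ^ 2 ∂P :=
          setIntegral_mono_ae integrable_condExp.integrableOn
            (integrable_const _).integrableOn hA
      _ = _ := by rw [setIntegral_const, smul_eq_mul, mul_comm]
  calc ∫⁻ p, ENNReal.ofReal (p.2 ^ 2) * h p.1 ∂P
      = ∫⁻ x, h x ∂((P.withDensity fun p => ENNReal.ofReal (p.2 ^ 2)).map Prod.fst) := by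
        rw [lintegral_map hh measurable_fst]
        exact (lintegral_withDensity_eq_lintegral_mul P hmY (hh.comp measurable_fst)).symm
    _ ≤ ∫⁻ x, h x ∂(ENNReal.ofReal (m ^ 2) • P.map Prod.fst) := lintegral_mono' hle le_rfl
    _ = _ := by rw [lintegral_smul_measure, lintegral_map hh measurable_fst, smul_eq_mul]

open scoped MatrixOrder in
/-- With `Sig = BᵀB`, the matrix `A = (Bᵀ)⁻¹` turns `X` into a vector `A X` with identity second
moment matrix. -/
theorem exists_whitening {d : ℕ} {Sig : Matrix (Fin d) (Fin d) ℝ} (hS : Sig.PosDef) :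
    ∃ A : Matrix (Fin d) (Fin d) ℝ, IsUnit A ∧ A * Sig * Aᵀ = 1 := by
  obtain ⟨B, hB⟩ := CStarAlgebra.nonneg_iff_eq_star_mul_self.mp hS.posSemidef.nonneg
  have hB' : Sig = Bᵀ * B := by
    rw [hB, star_eq_conjTranspose, conjTranspose_eq_transpose_of_trivial]
  have hu : IsUnit B.det := by
    have := (isUnit_iff_isUnit_det _).1 hS.isUnit
    rw [hB', det_mul] at this
    exact isUnit_of_mul_isUnit_right this
  have huT : IsUnit (Bᵀ).det := by rwa [det_transpose]
  refine ⟨(Bᵀ)⁻¹, ?_, ?_⟩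
  · exact (isUnit_nonsing_inv_iff).2 ((isUnit_iff_isUnit_det _).2 huT)
  · rw [hB', ← Matrix.mul_assoc, nonsing_inv_mul _ huT, Matrix.one_mul, transpose_nonsing_inv,
      transpose_transpose, mul_nonsing_inv _ hu]

/-- The diagonal of a positive definite matrix is positive, hence the integrals `∫ Xᵢ²` are not the
junk value `0` of a non-integrable function. -/
theorem memLp_coord {d : ℕ} {P : Measure ((Fin d → ℝ) × ℝ)}
    {Sig : Matrix (Fin d) (Fin d) ℝ} (hS : Sig.PosDef)
    (hP : ∀ i j, (∫ p, p.1 i * p.1 j ∂P) = Sig i j) (i : Fin d) :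
    MemLp (fun p : (Fin d → ℝ) × ℝ => p.1 i) 2 P := by
  rw [memLp_two_iff_integrable_sq (by fun_prop)]
  by_contra h
  have h1 := hP i i
  simp_rw [← pow_two] at h1
  rw [integral_undef h] at h1
  exact (hS.diag_pos (i := i)).ne h1

theorem memLp_dot {d : ℕ} {P : Measure ((Fin d → ℝ) × ℝ)}
    (hX : ∀ i, MemLp (fun p : (Fin d → ℝ) × ℝ => p.1 i) 2 P) (v : Fin d → ℝ) :
    MemLp (fun p : (Fin d → ℝ) × ℝ => v ⬝ᵥ p.1) 2 P := by
  unfold dotProduct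
  exact memLp_finsetSum _ fun i _ => (hX i).const_mul (v i)

theorem integral_dot_sq {d : ℕ} {P : Measure ((Fin d → ℝ) × ℝ)}
    {Sig : Matrix (Fin d) (Fin d) ℝ}
    (hX : ∀ i, MemLp (fun p : (Fin d → ℝ) × ℝ => p.1 i) 2 P)
    (hP : ∀ i j, (∫ p, p.1 i * p.1 j ∂P) = Sig i j) (v : Fin d → ℝ) :
    ∫ p, (v ⬝ᵥ p.1) ^ 2 ∂P = v ⬝ᵥ (Sig *ᵥ v) := by
  have hI : ∀ i j, Integrable (fun p : (Fin d → ℝ) × ℝ => v i * v j * (p.1 i * p.1 j)) P :=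
    fun i j => ((hX i).integrable_mul (hX j)).const_mul _
  have h : ∀ p : (Fin d → ℝ) × ℝ,
      (v ⬝ᵥ p.1) ^ 2 = ∑ i, ∑ j, v i * v j * (p.1 i * p.1 j) := fun p => by
    rw [pow_two, dotProduct, Finset.sum_mul_sum]
    exact Finset.sum_congr rfl fun i _ => Finset.sum_congr rfl fun j _ => by ring
  simp_rw [h]
  rw [integral_finsetSum _ fun i _ => integrable_finsetSum _ fun j _ => hI i j]
  simp only [dotProduct, mulVec, Finset.mul_sum]
  refine Finset.sum_congr rfl fun i _ => ?_
  rw [integral_finsetSum _ fun j _ => hI i j]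
  refine Finset.sum_congr rfl fun j _ => ?_
  rw [integral_const_mul, hP]; ring

theorem risk_eq_top {d : ℕ} {P : Measure ((Fin d → ℝ) × ℝ)}
    (hX : ∀ i, MemLp (fun p : (Fin d → ℝ) × ℝ => p.1 i) 2 P)
    (hY : ¬ Integrable (fun p : (Fin d → ℝ) × ℝ => p.2 ^ 2) P) (w : Fin d → ℝ) :
    risk P (fun x => w ⬝ᵥ x) = ⊤ := by
  by_contra hne
  apply hY
  have hw := memLp_dot hX w
  have hm : AEStronglyMeasurable (fun p : (Fin d → ℝ) × ℝ => w ⬝ᵥ p.1 - p.2) P :=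
    hw.1.sub (by fun_prop)
  have h1 : MemLp (fun p : (Fin d → ℝ) × ℝ => w ⬝ᵥ p.1 - p.2) 2 P := by
    rw [memLp_two_iff_integrable_sq hm]
    exact (lintegral_ofReal_ne_top_iff_integrable (hm.pow 2)
      (.of_forall fun p => sq_nonneg _)).1 hne
  have h2 := (hw.sub h1).integrable_sq
  simpa using h2

/-- with known covariance structure, there is an absolute constant `c > 0` such
that for all `d, n ≥ 1`, `m > 0`, `δ ∈ (0,1)` and every positive definite `Σ`, there is a
(proper, measurable) estimator `w̃` such that for every distribution `P` satisfying
Assumption 1 and `E[XXᵀ] = Σ`, with probability at least `1 - δ` over the i.i.d. sample,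
`R(⟨w̃,·⟩) - inf_{g ∈ F_lin} R(g) ≤ c m² (d + log(1/δ)) / n`. -/
theorem stmt13 : ∃ c > (0 : ℝ), ∀ d n : ℕ, 1 ≤ d → 1 ≤ n → ∀ m : ℝ, 0 < m →
    ∀ δ : ℝ, 0 < δ → δ < 1 →
    ∀ Sig : Matrix (Fin d) (Fin d) ℝ, Sig.PosDef →
    ∃ west : (Fin n → (Fin d → ℝ) × ℝ) → Fin d → ℝ, Measurable west ∧
      ∀ P : Measure ((Fin d → ℝ) × ℝ), IsProbabilityMeasure P → Assumption1 P m →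
        (∀ i j, (∫ p, p.1 i * p.1 j ∂P) = Sig i j) →
        ENNReal.ofReal (1 - δ) ≤
          (Measure.pi fun _ : Fin n => P)
            {s | risk P (fun x => west s ⬝ᵥ x)
                  ≤ (⨅ w : Fin d → ℝ, risk P fun x => w ⬝ᵥ x)
                    + ENNReal.ofReal (c * m ^ 2 * (d + Real.log (1 / δ)) / n)} := by
  refine ⟨432, by norm_num, fun d n hd hn m hm δ hδ hδ1 Sig hS => ?_⟩
  obtain ⟨A, hAu, hA⟩ := exists_whitening hS
  have hAdet : IsUnit A.det := (isUnit_iff_isUnit_det _).1 hAu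
  -- The mean of `U = Y • A X` is the coefficient vector of the best linear predictor in the
  -- whitened variable `A X`.
  let U : (Fin d → ℝ) × ℝ → Fin d → ℝ := fun p => p.2 • (A *ᵥ p.1)
  have hU : Measurable U := by
    have : Continuous U := by fun_prop
    exact this.measurable
  obtain ⟨est, hest, hmain⟩ := mean_est hd hn hm hδ hδ1 U hU
  refine ⟨fun s => est s ᵥ* A, ?_, ?_⟩
  · have : Continuous fun u : Fin d → ℝ => u ᵥ* A := by fun_prop
    exact this.measurable.comp hest
  intro P hPp hA1 hP
  have hX := memLp_coord hS hP
  by_cases hY : Integrable (fun p : (Fin d → ℝ) × ℝ => p.2 ^ 2) P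
  -- If `E[Y²] = ∞`, the conditional expectation in `Assumption1` is the junk value `0`, but every
  -- linear predictor has infinite risk and the inequality is trivial.
  swap
  · have : ∀ w : Fin d → ℝ, risk P (fun x => w ⬝ᵥ x) = ⊤ := risk_eq_top hX hY
    simp only [this, iInf_const, top_add, le_refl, Set.ofPred_true, measure_univ]
    exact ENNReal.ofReal_le_one.2 (by linarith)
  have hYL : MemLp (fun p : (Fin d → ℝ) × ℝ => p.2) 2 P :=
    (memLp_two_iff_integrable_sq (by fun_prop)).2 hY
  have hZL : ∀ c, MemLp (fun p : (Fin d → ℝ) × ℝ => c ⬝ᵥ A *ᵥ p.1) 2 P := fun c => by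
    simp_rw [dotProduct_mulVec]; exact memLp_dot hX _
  have hZ2 : ∀ c, ∫ p, (c ⬝ᵥ A *ᵥ p.1) ^ 2 ∂P = c ⬝ᵥ c := fun c => by
    simp_rw [dotProduct_mulVec]
    rw [integral_dot_sq hX hP, ← mulVec_transpose, dotProduct_comm, mulVec_mulVec,
      dotProduct_mulVec, vecMul_transpose, mulVec_mulVec, ← Matrix.mul_assoc, hA, one_mulVec]
  have hcU : ∀ c p, c ⬝ᵥ U p = p.2 * (c ⬝ᵥ A *ᵥ p.1) := fun c p => by
    simp only [U, dotProduct_smul, smul_eq_mul]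
  have hU2l : ∀ c, ∫⁻ p, ENNReal.ofReal ((c ⬝ᵥ U p) ^ 2) ∂P
      ≤ ENNReal.ofReal (m ^ 2 * (c ⬝ᵥ c)) := fun c => by
    have hc : Measurable fun x : Fin d → ℝ => ENNReal.ofReal ((c ⬝ᵥ A *ᵥ x) ^ 2) := by
      have : Continuous fun x : Fin d → ℝ => (c ⬝ᵥ A *ᵥ x) ^ 2 := by fun_prop
      exact ENNReal.measurable_ofReal.comp this.measurable
    have h := lintegral_sq_mul_le P hA1 hY hc
    rw [← ofReal_integral_eq_lintegral_ofReal (hZL c).integrable_sq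
      (.of_forall fun p => sq_nonneg _), hZ2, ← ENNReal.ofReal_mul (sq_nonneg m)] at h
    refine le_trans (le_of_eq (lintegral_congr fun p => ?_)) h
    rw [hcU, mul_pow, ENNReal.ofReal_mul (sq_nonneg _)]
  have hUm : ∀ c, AEStronglyMeasurable (fun p => c ⬝ᵥ U p) P := fun c => by
    have : Continuous fun p => c ⬝ᵥ U p := by fun_prop
    exact this.aestronglyMeasurable
  have hUI : ∀ c, Integrable (fun p => (c ⬝ᵥ U p) ^ 2) P := fun c =>
    (lintegral_ofReal_ne_top_iff_integrable ((hUm c).pow 2)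
      (.of_forall fun p => sq_nonneg _)).1 ((hU2l c).trans_lt ENNReal.ofReal_lt_top).ne
  have hUL : ∀ c, MemLp (fun p => c ⬝ᵥ U p) 2 P := fun c =>
    (memLp_two_iff_integrable_sq (hUm c)).2 (hUI c)
  have hU2 : ∀ c, ∫ p, (c ⬝ᵥ U p) ^ 2 ∂P ≤ m ^ 2 * (c ⬝ᵥ c) := fun c => by
    have h := hU2l c
    rw [← ofReal_integral_eq_lintegral_ofReal (hUI c) (.of_forall fun p => sq_nonneg _)] at h
    have hcc : 0 ≤ c ⬝ᵥ c := by
      rw [← hZ2 c]; exact integral_nonneg fun p => sq_nonneg _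
    exact (ENNReal.ofReal_le_ofReal_iff (by positivity)).1 h
  let μ : Fin d → ℝ := fun i => ∫ p, U p i ∂P
  have hμ : ∀ c, ∫ p, c ⬝ᵥ U p ∂P = c ⬝ᵥ μ := fun c => by
    have hi : ∀ i, Integrable (fun p => U p i) P := fun i => by
      simpa using (hUL (Pi.single i 1)).integrable (by norm_num)
    simp only [dotProduct]
    rw [integral_finsetSum _ fun i _ => (hi i).const_mul _]
    simp only [integral_const_mul, μ]
  set K : ℝ := ∫ p, p.2 ^ 2 ∂P - μ ⬝ᵥ μ with hK
  -- Up to the constant `K`, the risk is the squared distance to `μ`.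
  have hint : ∀ u : Fin d → ℝ,
      ∫ p, ((u ᵥ* A) ⬝ᵥ p.1 - p.2) ^ 2 ∂P = K + (u - μ) ⬝ᵥ (u - μ) := fun u => by
    have h : ∀ p : (Fin d → ℝ) × ℝ, ((u ᵥ* A) ⬝ᵥ p.1 - p.2) ^ 2
        = (u ⬝ᵥ A *ᵥ p.1) ^ 2 - 2 * (u ⬝ᵥ U p) + p.2 ^ 2 := fun p => by
      rw [hcU, ← dotProduct_mulVec]; ring
    have h2 : Integrable (fun p => 2 * (u ⬝ᵥ U p)) P :=
      ((hUL u).integrable (by norm_num)).const_mul 2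
    have h12 : Integrable (fun p => (u ⬝ᵥ A *ᵥ p.1) ^ 2 - 2 * (u ⬝ᵥ U p)) P :=
      (hZL u).integrable_sq.sub h2
    simp_rw [h]
    rw [integral_add h12 hY, integral_sub (hZL u).integrable_sq h2, integral_const_mul, hZ2, hμ,
      hK, sub_dotProduct, dotProduct_sub, dotProduct_sub, dotProduct_comm μ u]
    ring
  have hrisk : ∀ u : Fin d → ℝ, risk P (fun x => (u ᵥ* A) ⬝ᵥ x)
      = ENNReal.ofReal (K + (u - μ) ⬝ᵥ (u - μ)) := fun u => by
    have hI : Integrable (fun p : (Fin d → ℝ) × ℝ => ((u ᵥ* A) ⬝ᵥ p.1 - p.2) ^ 2) P :=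
      ((memLp_dot hX _).sub hYL).integrable_sq
    rw [← hint u, risk, ofReal_integral_eq_lintegral_ofReal hI
      (.of_forall fun p => sq_nonneg _)]
  have hK0 : 0 ≤ K := by
    have h := hint μ
    rw [sub_self, zero_dotProduct, add_zero] at h
    rw [← h]; exact integral_nonneg fun p => sq_nonneg _
  have hinf : ENNReal.ofReal K ≤ ⨅ w : Fin d → ℝ, risk P fun x => w ⬝ᵥ x := by
    refine le_iInf fun w => ?_
    have hw : w = (w ᵥ* A⁻¹) ᵥ* A := by
      rw [vecMul_vecMul, nonsing_inv_mul _ hAdet, vecMul_one]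
    rw [hw, hrisk]
    refine ENNReal.ofReal_le_ofReal (le_add_of_nonneg_right ?_)
    exact Finset.sum_nonneg fun i _ => mul_self_nonneg _
  refine (hmain P hPp hUL hU2 μ hμ).trans (measure_mono fun s hs => ?_)
  rw [Set.mem_ofPred_eq] at hs ⊢
  rw [hrisk]
  calc _ ≤ ENNReal.ofReal (K + 432 * m ^ 2 * (d + Real.log (1 / δ)) / n) :=
        ENNReal.ofReal_le_ofReal (by linarith)
    _ ≤ _ := ENNReal.ofReal_add_le.trans (by gcongr)
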